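/- Let f ∈ ℚ_2[x] be a nonzero polynomial. If σ_{ℚ_2}(f) = 0 then f has at most 1 root in ℚ_2, and if σ_{ℚ_2}(f) ≤ 1 then f has at most 3 distinct roots in ℚ_2. -/

import Mathlib

open Polynomial

/-- `f` admits a presentation of additive complexity `s` over `L`. -/
def HasAddComplexityPres {L : Type*} [Field L] (f : L[X]) (s : ℕ) : Prop :=
  ∃ (c d : ℕ → L) (m m' : ℕ → ℕ → ℕ) (Xs : ℕ → L[X]),
    Xs 0 = X ∧
    (∀ j, 1 ≤ j → j ≤ s →
      Xs j = C (c j) * ∏ i ∈ Finset.range j, Xs i ^ m i j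
           + C (d j) * ∏ i ∈ Finset.range j, Xs i ^ m' i j) ∧
    f = C (c (s+1)) * ∏ i ∈ Finset.range (s+1), Xs i ^ m i (s+1)

/-- The additive complexity `σ_L(f)`: the least `s` admitting such a presentation. -/
noncomputable def addComplexity {L : Type*} [Field L] (f : L[X]) : ℕ :=
  sInf {s | HasAddComplexityPres f s}

/-!
A polynomial of additive complexity at most one is, up to a constant, a power of `x` times a power
of a binomial `a x ^ k + b x ^ l`. Two nonzero roots of such a binomial have the same `(k - l)`-th
power, so their ratio is a root of unity: over any field the nonzero roots lie in one coset of the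
torsion subgroup of the unit group.

For `ℚ_[2]` that subgroup is `{1, -1}`. A root of unity lies in `ℤ_[2]`; one of odd order is
congruent to `1` modulo `2`, hence equal to `1` because `1` is a simple root of `x ^ n - 1` modulo
`2`; and there is none of order four because `-1` is not a square modulo `4`.
-/

section Presentations

variable {L : Type*} [Field L] {f : L[X]} {s : ℕ}

lemma HasAddComplexityPres.mul_X (h : HasAddComplexityPres f s) :
    HasAddComplexityPres (f * X) s := by
  obtain ⟨c, d, m, m', Xs, hX, hstep, hf⟩ := h
  refine ⟨c, d, fun i j ↦ m i j + if j = s + 1 then (if 0 = i then 1 else 0) else 0, m', Xs, hX,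
    fun j hj hjs ↦ ?_, ?_⟩
  · simpa [show j ≠ s + 1 by lia] using hstep j hj hjs
  · simp only [if_true, pow_add, Finset.prod_mul_distrib, Finset.prod_pow_boole, Finset.mem_range,
      Nat.succ_pos, hX]
    rw [← mul_assoc, ← hf]

lemma HasAddComplexityPres.add_C (h : HasAddComplexityPres f s) (a : L) :
    HasAddComplexityPres (f + C a) (s + 1) := by
  obtain ⟨c, d, m, m', Xs, hX, hstep, hf⟩ := h
  have prod_update (g : ℕ → ℕ) {j : ℕ} (hj : j ≤ s + 1) :
      ∏ i ∈ Finset.range j, Function.update Xs (s + 1) (f + C a) i ^ g i =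
        ∏ i ∈ Finset.range j, Xs i ^ g i := by
    refine Finset.prod_congr rfl fun i hi ↦ ?_
    rw [Function.update_of_ne (by grind)]
  -- The final product of `f` becomes the first summand of the new step `X_{s+1} = f + a`, whose
  -- second summand is `a` times the empty monomial.
  refine ⟨Function.update c (s + 2) 1, Function.update d (s + 1) a,
    fun i j ↦ if j = s + 2 then (if s + 1 = i then 1 else 0) else m i j,
    fun i j ↦ if j = s + 1 then 0 else m' i j,
    Function.update Xs (s + 1) (f + C a), by simpa using hX, fun j hj hjs ↦ ?_, ?_⟩
  · simp only [prod_update _ hjs, show j ≠ s + 2 by lia, ne_eq, not_false_eq_true,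
      Function.update_of_ne, if_false]
    rcases hjs.eq_or_lt with rfl | hlt
    · simp [← hf]
    · simpa [hlt.ne] using hstep j hj (by lia)
  · simp

lemma exists_hasAddComplexityPres (f : L[X]) : ∃ s, HasAddComplexityPres f s := by
  induction f using Polynomial.recOnHorner with
  | M0 => exact ⟨0, 0, 0, 0, 0, fun _ ↦ X, rfl, by lia, by simp⟩
  | MC f a _ _ ih => exact ih.imp' Nat.succ fun _ h ↦ h.add_C a
  | MX f _ ih => exact ih.imp fun _ h ↦ h.mul_X

lemma hasAddComplexityPres_addComplexity (f : L[X]) :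
    HasAddComplexityPres f (addComplexity f) :=
  Nat.sInf_mem (exists_hasAddComplexityPres f)

lemma HasAddComplexityPres.exists_eq_C_mul_X_pow (h : HasAddComplexityPres f 0) :
    ∃ (c : L) (n : ℕ), f = C c * X ^ n := by
  obtain ⟨c, _, m, _, Xs, hX, -, hf⟩ := h
  exact ⟨c 1, m 0 1, by simpa [hX] using hf⟩

lemma HasAddComplexityPres.exists_eq_C_mul_X_pow_mul_binomial_pow
    (h : HasAddComplexityPres f 1) :
    ∃ (a b c : L) (k l n r : ℕ), f = C c * (X ^ n * (C a * X ^ k + C b * X ^ l) ^ r) := by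
  obtain ⟨c, d, m, m', Xs, hX, hstep, hf⟩ := h
  have hX₁ : Xs 1 = C (c 1) * X ^ m 0 1 + C (d 1) * X ^ m' 0 1 := by
    simpa [hX] using hstep 1 le_rfl le_rfl
  exact ⟨c 1, d 1, c 2, m 0 1, m' 0 1, m 0 2, m 1 2,
    by simpa [Finset.prod_range_succ, hX, hX₁] using hf⟩

end Presentations

section Roots

lemma isOfFinOrder_div_of_binomial_roots {R : Type*} [CommRing R] [NoZeroDivisors R] {a b : R}
    {k l : ℕ} {x y : Rˣ} (hne : C a * X ^ k + C b * X ^ l ≠ 0)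
    (hx : (C a * X ^ k + C b * X ^ l).eval (x : R) = 0)
    (hy : (C a * X ^ k + C b * X ^ l).eval (y : R) = 0) :
    IsOfFinOrder (x / y) := by
  simp only [eval_add, eval_mul, eval_C, eval_pow, eval_X] at hx hy
  have ha : a ≠ 0 := by
    rintro rfl
    have hb : b = 0 := by simpa [← Units.val_pow_eq_pow_val, -mul_eq_zero] using hx
    simp [hb] at hne
  have hdet : (x : R) ^ k * y ^ l = x ^ l * y ^ k :=
    mul_left_cancel₀ ha (by linear_combination (y : R) ^ l * hx - (x : R) ^ l * hy)
  have hpow : (x / y) ^ k = (x / y) ^ l := by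
    rw [div_pow, div_pow, div_eq_div_iff_mul_eq_mul]
    exact Units.ext (by exact_mod_cast hdet)
  by_contra hxy
  obtain rfl : k = l := injective_pow_iff_not_isOfFinOrder.mpr hxy hpow
  have hab : a + b = 0 := by
    simpa [← add_mul, ← Units.val_pow_eq_pow_val, -mul_eq_zero] using hx
  exact hne (by rw [← add_mul, ← C_add, hab, C_0, zero_mul])

variable {L : Type*} [Field L] {f : L[X]}

lemma HasAddComplexityPres.eq_zero_of_eval_eq_zero (h : HasAddComplexityPres f 0) (hf : f ≠ 0)
    {x : L} (hx : f.eval x = 0) : x = 0 := by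
  obtain ⟨c, n, rfl⟩ := h.exists_eq_C_mul_X_pow
  have hc : c ≠ 0 := by
    rintro rfl
    simp at hf
  rw [eval_C_mul, eval_X_pow] at hx
  exact eq_zero_of_pow_eq_zero ((mul_eq_zero.mp hx).resolve_left hc)

lemma HasAddComplexityPres.div_mem_torsion (h : HasAddComplexityPres f 1) (hf : f ≠ 0)
    {x y : Lˣ} (hx : f.eval (x : L) = 0) (hy : f.eval (y : L) = 0) :
    x / y ∈ CommGroup.torsion Lˣ := by
  obtain ⟨a, b, c, k, l, n, r, rfl⟩ := h.exists_eq_C_mul_X_pow_mul_binomial_pow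
  have hc : c ≠ 0 := by
    rintro rfl
    simp at hf
  have eval_binomial {z : Lˣ}
      (hz : (C c * (X ^ n * (C a * X ^ k + C b * X ^ l) ^ r)).eval (z : L) = 0) :
      (C a * X ^ k + C b * X ^ l).eval (z : L) = 0 ∧ r ≠ 0 := by
    rw [eval_C_mul, eval_mul, eval_X_pow, eval_pow] at hz
    simpa only [mul_eq_zero, hc, pow_eq_zero_iff', z.ne_zero, ne_eq, false_and, false_or] using hz
  obtain ⟨hx, hr⟩ := eval_binomial hx
  have hne : C a * X ^ k + C b * X ^ l ≠ 0 := by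
    intro h₀
    simp [h₀, hr] at hf
  exact isOfFinOrder_div_of_binomial_roots hne hx (eval_binomial hy).1

lemma encard_le_card_add_one_of_div_mem {G₀ : Type*} [GroupWithZero G₀] (H : Subgroup G₀ˣ)
    {S : Set G₀} (hS : ∀ x y : G₀ˣ, (x : G₀) ∈ S → (y : G₀) ∈ S → x / y ∈ H) :
    S.encard ≤ ENat.card H + 1 := by
  by_cases hy : ∃ y : G₀ˣ, (y : G₀) ∈ S
  · obtain ⟨y, hy⟩ := hy
    have hsub : S ⊆ insert 0 (Set.range fun u : H ↦ ((u * y : G₀ˣ) : G₀)) := by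
      intro x hx
      rcases eq_or_ne x 0 with rfl | hx₀
      · exact Set.mem_insert _ _
      · lift x to G₀ˣ using hx₀.isUnit
        exact Set.mem_insert_of_mem _ ⟨⟨x / y, hS x y hx hy⟩, by simp⟩
    calc S.encard ≤ (Set.range fun u : H ↦ ((u * y : G₀ˣ) : G₀)).encard + 1 :=
          (Set.encard_le_encard hsub).trans (Set.encard_insert_le _ _)
      _ ≤ ENat.card H + 1 := by
          grw [← Set.image_univ, Set.encard_image_le, Set.encard_univ]
  · have hsub : S ⊆ {0} := fun x hx ↦ by
      by_contra hx₀
      exact hy ⟨Units.mk0 x hx₀, hx⟩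
    grw [hsub, Set.encard_singleton, ← le_add_self]

theorem twoadic_root_count_sigma_le_one_general (f : L[X]) (hf : f ≠ 0) :
    (addComplexity f = 0 → {x : L | f.eval x = 0}.encard ≤ 1) ∧
    (addComplexity f ≤ 1 →
      {x : L | f.eval x = 0}.encard ≤ ENat.card (CommGroup.torsion Lˣ) + 1) := by
  have hpres := hasAddComplexityPres_addComplexity f
  have hzero (h : addComplexity f = 0) : {x : L | f.eval x = 0}.encard ≤ 1 := by
    rw [h] at hpres
    exact Set.encard_le_one_iff_subsingleton.mpr fun x hx y hy ↦
      (hpres.eq_zero_of_eval_eq_zero hf hx).trans (hpres.eq_zero_of_eval_eq_zero hf hy).symm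
  refine ⟨hzero, fun h ↦ ?_⟩
  rcases Nat.le_one_iff_eq_zero_or_eq_one.mp h with h | h
  · exact (hzero h).trans le_add_self
  · rw [h] at hpres
    exact encard_le_card_add_one_of_div_mem _ fun x y ↦ hpres.div_mem_torsion hf

end Roots

section RootsOfUnity

variable {R : Type*} [CommRing R] [NoZeroDivisors R] {x : R} {n : ℕ}

lemma eq_of_pow_eq_pow_of_prime_dvd_sub {p y : R} (hp : Prime p) (hxy : p ∣ x - y)
    (hx : ¬p ∣ x) (hn : ¬p ∣ (n : R)) (h : x ^ n = y ^ n) : x = y := by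
  have hsum : ∑ i ∈ Finset.range n, x ^ i * y ^ (n - 1 - i) ≠ 0 := fun h₀ ↦
    not_dvd_geom_sum₂ hp hxy hx hn (h₀ ▸ dvd_zero p)
  have hmul := (Commute.all x y).geom_sum₂_mul n
  rw [h, sub_self] at hmul
  exact sub_eq_zero.mp ((mul_eq_zero.mp hmul).resolve_left hsum)

lemma sq_eq_one_of_pow_two_pow_eq_one (hneg : ¬IsSquare (-1 : R)) {k : ℕ}
    (hx : x ^ 2 ^ k = 1) : x ^ 2 = 1 := by
  induction k with
  | zero => simp_all
  | succ k ih =>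
    have hsq : (x ^ 2 ^ k) ^ 2 = 1 := by rw [← pow_mul, ← pow_succ, hx]
    rcases sq_eq_one_iff.mp hsq with h | h
    · exact ih h
    · cases k with
      | zero => simpa using hsq
      | succ k => exact absurd ⟨x ^ 2 ^ k, by rw [← h, pow_succ, pow_mul, sq]⟩ hneg

end RootsOfUnity

section Padic

lemma eq_one_of_pow_eq_one_of_toZMod_eq_one {p : ℕ} [Fact p.Prime] {n : ℕ} (hn : ¬p ∣ n)
    {x : ℤ_[p]} (hmod : PadicInt.toZMod x = 1) (hx : x ^ n = 1) : x = 1 := by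
  have dvd_iff (z : ℤ_[p]) : (p : ℤ_[p]) ∣ z ↔ PadicInt.toZMod z = 0 := by
    rw [← RingHom.mem_ker, PadicInt.ker_toZMod, PadicInt.maximalIdeal_eq_span_p,
      Ideal.mem_span_singleton]
  refine eq_of_pow_eq_pow_of_prime_dvd_sub PadicInt.prime_p ?_ ?_ ?_ (hx.trans (one_pow n).symm)
  · rw [dvd_iff, map_sub, hmod, map_one, sub_self]
  · rw [dvd_iff, hmod]
    exact one_ne_zero
  · rwa [dvd_iff, map_natCast, ZMod.natCast_eq_zero_iff]

lemma not_isSquare_neg_one_padicInt_two : ¬IsSquare (-1 : ℤ_[2]) := by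
  intro h
  have hmod := h.map (PadicInt.toZModPow (p := 2) 2)
  rw [map_neg, map_one] at hmod
  revert hmod
  decide

lemma sq_eq_one_of_pow_eq_one_padicInt_two {x : ℤ_[2]} {n : ℕ} (hn : n ≠ 0) (hx : x ^ n = 1) :
    x ^ 2 = 1 := by
  obtain ⟨k, m, hm, rfl⟩ := Nat.exists_eq_two_pow_mul_odd hn
  have hmod : PadicInt.toZMod x = 1 := by
    have hne : PadicInt.toZMod x ≠ 0 := by
      intro h₀
      have h := congrArg PadicInt.toZMod hx
      rw [map_pow, h₀, zero_pow hn, map_one] at h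
      exact zero_ne_one h
    exact (by decide : ∀ z : ZMod 2, z ≠ 0 → z = 1) _ hne
  refine sq_eq_one_of_pow_two_pow_eq_one not_isSquare_neg_one_padicInt_two (k := k) ?_
  exact eq_one_of_pow_eq_one_of_toZMod_eq_one hm.not_two_dvd_nat (by rw [map_pow, hmod, one_pow])
    (by rw [← pow_mul, hx])

lemma torsion_units_padic_two : CommGroup.torsion ℚ_[2]ˣ = rootsOfUnity 2 ℚ_[2] := by
  ext u
  rw [CommGroup.mem_torsion, mem_rootsOfUnity, isOfFinOrder_iff_pow_eq_one]
  refine ⟨fun ⟨n, hn, hu⟩ ↦ ?_, fun hu ↦ ⟨2, two_pos, hu⟩⟩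
  have hpow : (u : ℚ_[2]) ^ n = 1 := by
    rw [← Units.val_pow_eq_pow_val, hu, Units.val_one]
  obtain ⟨x, hx⟩ := IsIntegrallyClosed.exists_algebraMap_eq_of_isIntegral_pow (R := ℤ_[2]) hn
    (hpow ▸ isIntegral_one)
  have hx₁ : x ^ n = 1 := FaithfulSMul.algebraMap_injective ℤ_[2] ℚ_[2] (by
    rw [map_pow, hx, hpow, map_one])
  apply Units.ext
  rw [Units.val_pow_eq_pow_val, ← hx, ← map_pow,
    sq_eq_one_of_pow_eq_one_padicInt_two hn.ne' hx₁, map_one, Units.val_one]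

lemma card_torsion_units_padic_two_le : ENat.card (CommGroup.torsion ℚ_[2]ˣ) ≤ 2 := by
  rw [torsion_units_padic_two, ENat.card_eq_coe_natCard]
  exact_mod_cast card_rootsOfUnity ℚ_[2] 2

end Padic

theorem twoadic_root_count_sigma_le_one
    (f : Polynomial ℚ_[2]) (hf : f ≠ 0) :
    (addComplexity f = 0 → {x : ℚ_[2] | f.eval x = 0}.ncard ≤ 1) ∧
    (addComplexity f ≤ 1 → {x : ℚ_[2] | f.eval x = 0}.ncard ≤ 3) := by
  obtain ⟨hzero, hone⟩ := twoadic_root_count_sigma_le_one_general f hf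
  exact ⟨fun h ↦ (Set.encard_le_coe_iff_finite_ncard_le.mp (hzero h)).2,
    fun h ↦ (Set.encard_le_coe_iff_finite_ncard_le.mp
      ((hone h).trans (add_le_add_left card_torsion_units_padic_two_le 1))).2⟩
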